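/- Let T be an R-linear triangulated category, C a full subcategory, and r ∈ R. Then C * T_r ⊆ T_{r²} * C. -/

import Mathlib

/-!
Let `A ⟶ E ⟶ B ⟶ A⟦1⟧` be distinguished with `r` zero on `B`. The connecting morphism is
annihilated by `r`, so multiplication by `r` on `A` factors as `f ≫ u` with `f : A ⟶ E` and
`u : E ⟶ A`. The cone `K` of `u` and the cone `D` of `r : A ⟶ A` sit in an octahedral triangle
`B ⟶ D ⟶ K ⟶ B⟦1⟧`. As `r` kills `B` and `r ^ 2` kills `D`, this only gives that `r ^ 3` kills `K`.
The exponent drops to two because `r` on `D` factors through `A`, the resulting map `D ⟶ A`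
extends along `D ⟶ K`, and `r` annihilates the cone morphism `w : A ⟶ K`, as
`r • w = f ≫ u ≫ w = 0`.
The triangle `K⟦-1⟧ ⟶ E ⟶ A ⟶ K` then exhibits `E` in `T_{r²} * C`.
-/

open CategoryTheory Limits Pretriangulated

universe v u

variable (C : Type u) [Category.{v} C] [Preadditive C] [HasZeroObject C]
  [HasShift C ℤ] [∀ n : ℤ, (shiftFunctor C n).Additive] [Pretriangulated C]

/-- `starOp C S T` is the class of objects `E` fitting into a distinguished triangle
`A ⟶ E ⟶ B ⟶ A⟦1⟧` with `A ∈ S` and `B ∈ T`. -/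
def starOp (S T : Set C) : Set C :=
  {E | ∃ (A B : C) (f : A ⟶ E) (g : E ⟶ B) (h : B ⟶ A⟦(1 : ℤ)⟧),
    A ∈ S ∧ B ∈ T ∧ Triangle.mk f g h ∈ distTriang C}

variable [HasBinaryBiproducts C]

/-- Closure of a class of objects under finite direct sums, retracts and shifts. -/
inductive AddClosure (S : Set C) : C → Prop
  | of (X : C) : X ∈ S → AddClosure S X
  | zero (X : C) : IsZero X → AddClosure S X
  | shift (X : C) (k : ℤ) : AddClosure S X → AddClosure S (X⟦k⟧)
  | sum (X Y : C) : AddClosure S X → AddClosure S Y → AddClosure S (X ⊞ Y)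
  | retract (X Y : C) (i : X ⟶ Y) (p : Y ⟶ X) :
      i ≫ p = 𝟙 X → AddClosure S Y → AddClosure S X

/-- `pow C S n` is the `n`-fold diamond `S ⋄ ⋯ ⋄ S`, where `S ⋄ T = add (S * T)`. -/
def pow (S : Set C) : ℕ → Set C
  | 0 => {X | IsZero X}
  | n + 1 => {X | AddClosure C (starOp C S (pow S n)) X}

/-- A morphism `f` is a `P`-ghost if every composite `Q⟦k⟧ ⟶ X ⟶ Y` with `Q ∈ P` vanishes. -/
def IsGhost (P : Set C) {X Y : C} (f : X ⟶ Y) : Prop :=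
  ∀ Q ∈ P, ∀ (k : ℤ) (g : Q⟦k⟧ ⟶ X), g ≫ f = 0

/-- `GhostPow C P n f` : `f` is an `n`-fold composite of `P`-ghosts. -/
inductive GhostPow (P : Set C) : ℕ → ∀ {X Y : C}, (X ⟶ Y) → Prop
  | zero {X Y : C} (f : X ⟶ Y) : GhostPow P 0 f
  | comp {n : ℕ} {X Y Z : C} (f : X ⟶ Y) (g : Y ⟶ Z) :
      IsGhost C P f → GhostPow P n g → GhostPow P (n + 1) (f ≫ g)

/-- The objects whose identity is annihilated by the scalar `r`. -/
def Tkill (R : Type*) [CommRing R] [Linear R C] (r : R) : Set C := {X | r • (𝟙 X) = 0}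

section Linear

variable {𝒯 𝒟 R : Type*} [Category* 𝒯] [Preadditive 𝒯] [Category* 𝒟] [Preadditive 𝒟]
  [Semiring R] [Linear R 𝒯] [Linear R 𝒟] {a : R}

lemma smul_eq_zero_of_smul_id_source_eq_zero {X Y : 𝒯} (hX : a • 𝟙 X = 0) (f : X ⟶ Y) :
    a • f = 0 := by
  rw [← Category.id_comp f, ← Linear.smul_comp, hX, zero_comp]

lemma smul_eq_zero_of_smul_id_target_eq_zero {X Y : 𝒯} (hY : a • 𝟙 Y = 0) (f : X ⟶ Y) :
    a • f = 0 := by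
  rw [← Category.comp_id f, ← Linear.comp_smul, hY, comp_zero]

lemma smul_id_obj_eq_zero (F : 𝒯 ⥤ 𝒟) [F.Linear R] {X : 𝒯} (hX : a • 𝟙 X = 0) :
    a • 𝟙 (F.obj X) = 0 := by
  rw [← F.map_id, ← F.map_smul, hX, ← zero_smul R (0 : X ⟶ X), F.map_smul, zero_smul]

lemma comp_map_smul_id (F : 𝒯 ⥤ 𝒟) [F.Linear R] {X : 𝒟} {Y : 𝒯} (f : X ⟶ F.obj Y) (a : R) :
    f ≫ F.map (a • 𝟙 Y) = a • f := by
  rw [F.map_smul, F.map_id, Linear.comp_smul, Category.comp_id]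

end Linear

section Pretriangulated

variable {𝒯 : Type*} [Category* 𝒯] [Preadditive 𝒯] [HasZeroObject 𝒯] [HasShift 𝒯 ℤ]
  [∀ n : ℤ, (shiftFunctor 𝒯 n).Additive] [Pretriangulated 𝒯]

lemma exists_eq_mor₁_comp {X Y Z W : 𝒯} {f : X ⟶ Y} {g : Y ⟶ Z} {h : Z ⟶ X⟦(1 : ℤ)⟧}
    (hT : Triangle.mk f g h ∈ distTriang 𝒯) (t : X ⟶ W) (ht : h ≫ t⟦(1 : ℤ)⟧' = 0) :
    ∃ u : Y ⟶ W, t = f ≫ u := by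
  obtain ⟨v, hv⟩ : ∃ v : Y⟦(1 : ℤ)⟧ ⟶ W⟦(1 : ℤ)⟧, t⟦(1 : ℤ)⟧' = (-f⟦(1 : ℤ)⟧') ≫ v :=
    Triangle.yoneda_exact₃ _ (rot_of_distTriang _ hT) _ ht
  obtain ⟨u, rfl⟩ := (shiftFunctor 𝒯 (1 : ℤ)).map_surjective v
  exact ⟨-u, (shiftFunctor 𝒯 (1 : ℤ)).map_injective (by simpa using hv)⟩

section Smul

variable {R : Type*} [Semiring R] [Linear R 𝒯] {a : R}

lemma exists_smul_id_eq_comp_mor₂ {X Y Z : 𝒯} {f : X ⟶ Y} {g : Y ⟶ Z} {h : Z ⟶ X⟦(1 : ℤ)⟧}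
    (hT : Triangle.mk f g h ∈ distTriang 𝒯) (hh : a • h = 0) :
    ∃ s : Z ⟶ Y, a • 𝟙 Z = s ≫ g :=
  Triangle.coyoneda_exact₃ _ hT (a • 𝟙 Z) <| by
    change (a • 𝟙 Z) ≫ h = 0
    rw [Linear.smul_comp, Category.id_comp, hh]

lemma eq_zero_of_comp_cone_smul_id_eq_zero {X D B : 𝒯} {p : X ⟶ D} {d : D ⟶ X⟦(1 : ℤ)⟧}
    (hD : Triangle.mk (a • 𝟙 X) p d ∈ distTriang 𝒯) (hB : a • 𝟙 B = 0)
    (t : B ⟶ X) (ht : t ≫ p = 0) : t = 0 := by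
  obtain ⟨c, rfl⟩ : ∃ c : B ⟶ X, t = c ≫ (a • 𝟙 X) := Triangle.coyoneda_exact₂ _ hD t ht
  rw [Linear.comp_smul, Category.comp_id, smul_eq_zero_of_smul_id_source_eq_zero hB]

variable [∀ n : ℤ, Functor.Linear R (shiftFunctor 𝒯 n)]

lemma exists_smul_id_eq_mor₁_comp {X Y Z : 𝒯} {f : X ⟶ Y} {g : Y ⟶ Z} {h : Z ⟶ X⟦(1 : ℤ)⟧}
    (hT : Triangle.mk f g h ∈ distTriang 𝒯) (hh : a • h = 0) :
    ∃ u : Y ⟶ X, a • 𝟙 X = f ≫ u :=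
  exists_eq_mor₁_comp hT (a • 𝟙 X) (by rw [comp_map_smul_id, hh])

lemma exists_smul_id_cone_smul_id_eq_comp {X D : 𝒯} {p : X ⟶ D} {d : D ⟶ X⟦(1 : ℤ)⟧}
    (hD : Triangle.mk (a • 𝟙 X) p d ∈ distTriang 𝒯) :
    ∃ y : D ⟶ X, a • 𝟙 D = y ≫ p :=
  exists_smul_id_eq_comp_mor₂ hD <| by
    rw [← comp_map_smul_id (shiftFunctor 𝒯 (1 : ℤ)) d a]
    exact comp_distTriang_mor_zero₃₁ _ hD

lemma mul_self_smul_id_eq_zero_of_cone_smul_id {A B D K : 𝒯}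
    {p : A ⟶ D} {d : D ⟶ A⟦(1 : ℤ)⟧} (hD : Triangle.mk (a • 𝟙 A) p d ∈ distTriang 𝒯)
    {b : B ⟶ D} {k : D ⟶ K} {e : K ⟶ B⟦(1 : ℤ)⟧} (hK : Triangle.mk b k e ∈ distTriang 𝒯)
    (hB : a • 𝟙 B = 0) (hpk : a • (p ≫ k) = 0) : (a * a) • 𝟙 K = 0 := by
  obtain ⟨s, hs⟩ : ∃ s : K ⟶ D, a • 𝟙 K = s ≫ k :=
    exists_smul_id_eq_comp_mor₂ hK
      (smul_eq_zero_of_smul_id_target_eq_zero (smul_id_obj_eq_zero _ hB) e)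
  obtain ⟨y, hy⟩ : ∃ y : D ⟶ A, a • 𝟙 D = y ≫ p := exists_smul_id_cone_smul_id_eq_comp hD
  have hby : b ≫ y = 0 := by
    refine eq_zero_of_comp_cone_smul_id_eq_zero hD hB _ ?_
    rw [Category.assoc, ← hy, Linear.comp_smul, Category.comp_id,
      smul_eq_zero_of_smul_id_source_eq_zero hB]
  obtain ⟨z, rfl⟩ : ∃ z : K ⟶ A, y = k ≫ z := Triangle.yoneda_exact₂ _ hK y hby
  calc
    (a * a) • 𝟙 K = s ≫ (a • 𝟙 D) ≫ k := by
      rw [mul_smul, hs, Linear.smul_comp, Category.id_comp, Linear.comp_smul]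
    _ = (s ≫ k) ≫ z ≫ p ≫ k := by simp only [hy, Category.assoc]
    _ = z ≫ (a • (p ≫ k)) := by
      rw [← hs, Linear.smul_comp, Category.id_comp, Linear.comp_smul]
    _ = 0 := by rw [hpk, comp_zero]

lemma mul_self_smul_id_cone_eq_zero [IsTriangulated 𝒯] {A E B K : 𝒯}
    {f : A ⟶ E} {g : E ⟶ B} {h : B ⟶ A⟦(1 : ℤ)⟧} (hT : Triangle.mk f g h ∈ distTriang 𝒯)
    (hB : a • 𝟙 B = 0) {u : E ⟶ A} (hu : a • 𝟙 A = f ≫ u)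
    {w : A ⟶ K} {i : K ⟶ E⟦(1 : ℤ)⟧} (hK : Triangle.mk u w i ∈ distTriang 𝒯) :
    (a * a) • 𝟙 K = 0 := by
  obtain ⟨D, p, d, hD⟩ := distinguished_cocone_triangle (a • 𝟙 A)
  let O := Triangulated.someOctahedron hu.symm hT hK hD
  have huw : u ≫ w = 0 := comp_distTriang_mor_zero₁₂ _ hK
  refine mul_self_smul_id_eq_zero_of_cone_smul_id hD O.mem hB ?_
  calc
    a • (p ≫ O.m₃) = (a • 𝟙 A) ≫ w := by rw [O.comm₃, Linear.smul_comp, Category.id_comp]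
    _ = 0 := by rw [hu, Category.assoc, huw, comp_zero]

end Smul

theorem star_Tkill_subset_general [IsTriangulated 𝒯] (R : Type*) [CommRing R] [Linear R 𝒯]
    [∀ n : ℤ, Functor.Linear R (shiftFunctor 𝒯 n)] (S : Set 𝒯) (r : R) :
    starOp 𝒯 S (Tkill 𝒯 R r) ⊆ starOp 𝒯 (Tkill 𝒯 R (r * r)) S := by
  rintro E ⟨A, B, f, g, h, hA, hB, hT⟩
  obtain ⟨u, hu⟩ : ∃ u : E ⟶ A, r • 𝟙 A = f ≫ u :=
    exists_smul_id_eq_mor₁_comp hT (smul_eq_zero_of_smul_id_source_eq_zero hB h)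
  obtain ⟨K, w, i, hK⟩ := distinguished_cocone_triangle u
  have hK_kill : (r * r) • 𝟙 K = 0 := mul_self_smul_id_cone_eq_zero hT hB hu hK
  exact ⟨K⟦(-1 : ℤ)⟧, A, _, u, _, smul_id_obj_eq_zero _ hK_kill, hA, inv_rot_of_distTriang _ hK⟩

end Pretriangulated

/-- in an `R`-linear triangulated category, `C * T_r ⊆ T_{r²} * C`
for any isomorphism-closed full subcategory `C`. -/
theorem star_Tkill_subset [IsTriangulated C] (R : Type*) [CommRing R] [Linear R C]
    [∀ n : ℤ, Functor.Linear R (shiftFunctor C n)]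
    (S : Set C) (hS : ∀ ⦃X Y : C⦄, (X ≅ Y) → X ∈ S → Y ∈ S) (r : R) :
    starOp C S (Tkill C R r) ⊆ starOp C (Tkill C R (r * r)) S :=
  star_Tkill_subset_general R S r
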